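/- Monotone type (1) generalized quantifiers can be eliminated in favour of induced generalized atoms: let Q be a monotone generalized quantifier of type (1). Every formula χ of FO(Q) can be effectively translated into a formula χ* of FO(𝒜_Q) such that 𝔄,U ⊨ χ if and only if 𝔄,U ⊨ χ* for all models 𝔄 and all teams U whose domain contains the free variables of χ. More precisely, for every clean formula β of FO(Q) and every subformula φ of β, and for all 𝔄 and all appropriate teams U: 𝔄,U ⊨ φ iff 𝔄,U ⊨ φ*, where (·)* is the translation defined below; the translation χ* moreover contains no occurrence of ∃ or Q, its only quantifier being ∀. -/

import Mathlib

/- STATEMENT 13: Monotone type (1) generalized quantifiers can be eliminated in favour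
   of the induced generalized atoms. -/

/-- Assignments with a finite domain: a variable outside the domain is sent to `none`. -/
abbrev PAssign (A : Type) := ℕ → Option A

/-- `s[a/x]`. -/
def pupdate {A : Type} (s : PAssign A) (x : ℕ) (a : A) : PAssign A :=
  fun w => if w = x then some a else s w

/-- A model for a purely relational vocabulary `σ` with arities `ar`. -/
structure TModel (σ : Type) (ar : σ → ℕ) : Type 1 where
  A : Type
  ne : Nonempty A
  rel : ∀ R : σ, (Fin (ar R) → A) → Prop

/-- A generalized quantifier of type (1): an isomorphism-closed class of structures
`(A,B)` with `A ≠ ∅` and `B ⊆ A`.  `mem A hA` is `Q^A`. -/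
structure Quant1 : Type 1 where
  mem : ∀ (A : Type), Nonempty A → Set (Set A)
  iso_closed : ∀ (A B : Type) (hA : Nonempty A) (hB : Nonempty B) (e : A ≃ B) (X : Set A),
    X ∈ mem A hA → (e '' X) ∈ mem B hB

/-- A type (1) quantifier is monotone if `A ⊆ B` and `A ∈ Q^C` imply `B ∈ Q^C`. -/
def MonotoneQ (Q : Quant1) : Prop :=
  ∀ (C : Type) (hC : Nonempty C) (X Y : Set C), X ⊆ Y → X ∈ Q.mem C hC → Y ∈ Q.mem C hC

/-- The dual quantifier `Q^d := { (C,D) : (C, C∖D) ∉ Q }`. -/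
def Quant1.dual (Q : Quant1) : Quant1 where
  mem := fun A hA => {D | Dᶜ ∉ Q.mem A hA}
  iso_closed := by
    intro A B hA hB e X hX hcon
    apply hX
    have h := Q.iso_closed B A hB hA e.symm ((e '' X)ᶜ) hcon
    rwa [Set.image_compl_eq e.symm.bijective, Equiv.symm_image_image] at h

/-- The quantifier `Q' := { (A,B) : (A, A∖B) ∈ Q }`. -/
def Quant1.prime (Q : Quant1) : Quant1 where
  mem := fun A hA => {D | Dᶜ ∈ Q.mem A hA}
  iso_closed := by
    intro A B hA hB e X hX
    have h := Q.iso_closed A B hA hB e Xᶜ hX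
    rwa [Set.image_compl_eq e.bijective] at h

/-- The existential quantifier `∃` as a type (1) monotone generalized quantifier. -/
def exQ : Quant1 where
  mem := fun A _ => {X | X.Nonempty}
  iso_closed := by
    intro A B hA hB e X hX
    exact hX.image e

/-- The universal quantifier `∀ = ∃^d` as a type (1) monotone generalized quantifier. -/
def allQ : Quant1 := exQ.dual

/-- Formulas of first-order logic in negation normal form extended with type (1)
generalized quantifiers `Qx φ` and with the induced generalized atoms `A_Q(ȳ,x)`.
`FO(Q)` is the fragment using no induced atoms and only the quantifiers
`∃, ∀, Q, Q^d`; `FO(𝒜_Q)` is the fragment whose atoms are induced by `Q` and `Q'`. -/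
inductive GForm (σ : Type) (ar : σ → ℕ) : Type 1
  | rel (R : σ) (ts : Fin (ar R) → ℕ)
  | nrel (R : σ) (ts : Fin (ar R) → ℕ)
  | eq (x y : ℕ)
  | neq (x y : ℕ)
  | and (φ ψ : GForm σ ar)
  | or (φ ψ : GForm σ ar)
  | qu (Q : Quant1) (x : ℕ) (φ : GForm σ ar)
  | qatom (Q : Quant1) (k : ℕ) (ys : Fin k → ℕ) (x : ℕ)

/-- Lax team semantics.  For the quantifier: `𝔄,U ⊨ Qx φ` iff there is `f : U → Q^A`
with `𝔄,U[f/x] ⊨ φ`.  For the induced `k`-atom: `𝔄,U ⊨ A_Q(ȳ,x)` iff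
`Rel(U₀,x) ∈ Q^A` for each maximal nonempty subteam `U₀ ⊆ U` whose assignments all
agree on `ȳ`. -/
def GSat {σ : Type} {ar : σ → ℕ} (M : TModel σ ar) : Set (PAssign M.A) → GForm σ ar → Prop
  | U, .rel R ts => ∀ s ∈ U, ∃ vv : Fin (ar R) → M.A,
      (∀ i, s (ts i) = some (vv i)) ∧ M.rel R vv
  | U, .nrel R ts => ∀ s ∈ U, ∃ vv : Fin (ar R) → M.A,
      (∀ i, s (ts i) = some (vv i)) ∧ ¬ M.rel R vv
  | U, .eq x y => ∀ s ∈ U, ∃ a : M.A, s x = some a ∧ s y = some a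
  | U, .neq x y => ∀ s ∈ U, ∃ a b : M.A, s x = some a ∧ s y = some b ∧ a ≠ b
  | U, .and φ ψ => GSat M U φ ∧ GSat M U ψ
  | U, .or φ ψ => ∃ U₀ U₁ : Set (PAssign M.A),
      U₀ ⊆ U ∧ U₁ ⊆ U ∧ U₀ ∪ U₁ = U ∧ GSat M U₀ φ ∧ GSat M U₁ ψ
  | U, .qu Q x φ => ∃ f : PAssign M.A → Set M.A, (∀ s ∈ U, f s ∈ Q.mem M.A M.ne) ∧
      GSat M {t | ∃ s ∈ U, ∃ a ∈ f s, t = pupdate s x a} φ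
  | U, .qatom Q _ ys x => ∀ s ∈ U,
      {a : M.A | ∃ t ∈ U, (∀ i, t (ys i) = s (ys i)) ∧ t x = some a} ∈ Q.mem M.A M.ne

/-- Free variables. -/
def GForm.freeVars {σ : Type} {ar : σ → ℕ} : GForm σ ar → Finset ℕ
  | .rel _ ts => Finset.univ.image ts
  | .nrel _ ts => Finset.univ.image ts
  | .eq x y => {x, y}
  | .neq x y => {x, y}
  | .and φ ψ => φ.freeVars ∪ ψ.freeVars
  | .or φ ψ => φ.freeVars ∪ ψ.freeVars
  | .qu _ x φ => φ.freeVars.erase x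
  | .qatom _ _ ys x => insert x (Finset.univ.image ys)

/-- Bound variables. -/
def GForm.boundVars {σ : Type} {ar : σ → ℕ} : GForm σ ar → Finset ℕ
  | .and φ ψ => φ.boundVars ∪ ψ.boundVars
  | .or φ ψ => φ.boundVars ∪ ψ.boundVars
  | .qu _ x φ => insert x φ.boundVars
  | _ => ∅

/-- No quantifier binding `x` lies in the scope of another quantifier binding `x`
(`seen` collects the variables bound above the current position). -/
def GForm.CleanAux {σ : Type} {ar : σ → ℕ} : Finset ℕ → GForm σ ar → Prop
  | seen, .and φ ψ => φ.CleanAux seen ∧ ψ.CleanAux seen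
  | seen, .or φ ψ => φ.CleanAux seen ∧ ψ.CleanAux seen
  | seen, .qu _ x φ => x ∉ seen ∧ φ.CleanAux (insert x seen)
  | _, _ => True

/-- A formula is clean if no free variable also occurs bound and there is no nested
quantification of the same variable. -/
def GForm.Clean {σ : Type} {ar : σ → ℕ} (β : GForm σ ar) : Prop :=
  Disjoint β.freeVars β.boundVars ∧ β.CleanAux ∅

/-- All quantifiers of the formula belong to the given set, and the formula contains no
induced generalized atoms (i.e., it is a formula of `FO(Q)` when the set is
`{∃, ∀, Q, Q^d}`). -/
def GForm.UsesOnly {σ : Type} {ar : σ → ℕ} (Qs : Set Quant1) : GForm σ ar → Prop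
  | .and φ ψ => φ.UsesOnly Qs ∧ ψ.UsesOnly Qs
  | .or φ ψ => φ.UsesOnly Qs ∧ ψ.UsesOnly Qs
  | .qu Q _ φ => Q ∈ Qs ∧ φ.UsesOnly Qs
  | .qatom _ _ _ _ => False
  | _ => True

/-- The only quantifier occurring in the formula is `∀` (in particular there is no
occurrence of `∃` or `Q`). -/
def GForm.OnlyForall {σ : Type} {ar : σ → ℕ} : GForm σ ar → Prop
  | .and φ ψ => φ.OnlyForall ∧ ψ.OnlyForall
  | .or φ ψ => φ.OnlyForall ∧ ψ.OnlyForall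
  | .qu Q _ φ => Q = allQ ∧ φ.OnlyForall
  | _ => True

/-- The translation `(·)*` on clean formulas: atoms map to themselves, it commutes with
`∧` and `∨`, and `(Qx φ)* := ∀x( (A_Q(ȳ,x) ∧ φ*) ∨ A_{Q'}(ȳ,x) )`, where `ȳ` lists
exactly all variables quantified superordinate to `Qx φ` in the original clean formula
together with its free variables (maintained in the `Finset` accumulator). -/
def star {σ : Type} {ar : σ → ℕ} : Finset ℕ → GForm σ ar → GForm σ ar
  | _, .rel R ts => .rel R ts
  | _, .nrel R ts => .nrel R ts
  | _, .eq x y => .eq x y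
  | _, .neq x y => .neq x y
  | zs, .and φ ψ => .and (star zs φ) (star zs ψ)
  | zs, .or φ ψ => .or (star zs φ) (star zs ψ)
  | zs, .qu Q x φ =>
      let l := zs.sort (· ≤ ·)
      .qu allQ x (.or (.and (.qatom Q l.length l.get x) (star (insert x zs) φ))
        (.qatom Q.prime l.length l.get x))
  | _, .qatom Q k ys x => .qatom Q k ys x

/-- Tarskian satisfaction for the fragment without induced atoms. -/
def TSat {σ : Type} {ar : σ → ℕ} (M : TModel σ ar) : PAssign M.A → GForm σ ar → Prop
  | s, .rel R ts => ∃ vv : Fin (ar R) → M.A, (∀ i, s (ts i) = some (vv i)) ∧ M.rel R vv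
  | s, .nrel R ts => ∃ vv : Fin (ar R) → M.A, (∀ i, s (ts i) = some (vv i)) ∧ ¬ M.rel R vv
  | s, .eq x y => ∃ a : M.A, s x = some a ∧ s y = some a
  | s, .neq x y => ∃ a b : M.A, s x = some a ∧ s y = some b ∧ a ≠ b
  | s, .and φ ψ => TSat M s φ ∧ TSat M s ψ
  | s, .or φ ψ => TSat M s φ ∨ TSat M s ψ
  | s, .qu Q x φ => {a | TSat M (pupdate s x a) φ} ∈ Q.mem M.A M.ne
  | _, .qatom _ _ _ _ => False

theorem MonotoneQ.exQ : MonotoneQ exQ :=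
  fun _ _ _ _ hXY hX => Set.Nonempty.mono hXY hX

theorem MonotoneQ.dual {Q : Quant1} (hQ : MonotoneQ Q) : MonotoneQ Q.dual :=
  fun C hC _ _ hXY hX hY => hX (hQ C hC _ _ (Set.compl_subset_compl.2 hXY) hY)

theorem mem_allQ_iff {A : Type} {hA : Nonempty A} {X : Set A} :
    X ∈ allQ.mem A hA ↔ X = Set.univ := by
  change ¬ (Xᶜ).Nonempty ↔ _
  rw [Set.not_nonempty_iff_eq_empty, Set.compl_empty_iff]

theorem pupdate_self {A : Type} (s : PAssign A) (x : ℕ) (a : A) :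
    pupdate s x a x = some a := by
  simp [pupdate]

theorem pupdate_of_ne {A : Type} (s : PAssign A) {x y : ℕ} (a : A) (h : y ≠ x) :
    pupdate s x a y = s y := by
  simp [pupdate, h]

theorem exists_cover_iff_forall_or {α : Type*} {U : Set α} {p q : α → Prop} :
    (∃ U₀ U₁ : Set α, U₀ ⊆ U ∧ U₁ ⊆ U ∧ U₀ ∪ U₁ = U ∧ (∀ s ∈ U₀, p s) ∧ ∀ s ∈ U₁, q s) ↔
      ∀ s ∈ U, p s ∨ q s := by
  constructor
  · rintro ⟨U₀, U₁, -, -, rfl, h₀, h₁⟩ s (hs | hs)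
    · exact .inl (h₀ s hs)
    · exact .inr (h₁ s hs)
  · intro h
    refine ⟨{s ∈ U | p s}, {s ∈ U | q s}, Set.sep_subset _ _, Set.sep_subset _ _, ?_,
      fun s hs => hs.2, fun s hs => hs.2⟩
    rw [← Set.sep_or]
    exact Set.sep_eq_self_iff_mem_true.2 h

section

variable {σ : Type} {ar : σ → ℕ} {M : TModel σ ar}

/-- Locality: Tarskian satisfaction depends only on the values of the free variables. -/
theorem TSat.congr {φ : GForm σ ar} : ∀ {s t : PAssign M.A},
    (∀ y ∈ φ.freeVars, s y = t y) → (TSat M s φ ↔ TSat M t φ) := by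
  induction φ with
  | rel R ts =>
    intro s t h
    have h' : ∀ i, s (ts i) = t (ts i) := fun i => h _ (by simp [GForm.freeVars])
    simp only [TSat, h']
  | nrel R ts =>
    intro s t h
    have h' : ∀ i, s (ts i) = t (ts i) := fun i => h _ (by simp [GForm.freeVars])
    simp only [TSat, h']
  | eq x y =>
    intro s t h
    simp only [TSat, h x (by simp [GForm.freeVars]), h y (by simp [GForm.freeVars])]
  | neq x y =>
    intro s t h
    simp only [TSat, h x (by simp [GForm.freeVars]), h y (by simp [GForm.freeVars])]
  | and φ ψ ihφ ihψ =>
    intro s t h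
    simp only [GForm.freeVars, Finset.mem_union] at h
    exact and_congr (ihφ fun y hy => h y (.inl hy)) (ihψ fun y hy => h y (.inr hy))
  | or φ ψ ihφ ihψ =>
    intro s t h
    simp only [GForm.freeVars, Finset.mem_union] at h
    exact or_congr (ihφ fun y hy => h y (.inl hy)) (ihψ fun y hy => h y (.inr hy))
  | qu Q x φ ih =>
    intro s t h
    simp only [GForm.freeVars, Finset.mem_erase] at h
    have h' : ∀ a, TSat M (pupdate s x a) φ ↔ TSat M (pupdate t x a) φ := fun a =>
      ih fun y hy => by
        by_cases hyx : y = x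
        · simp [pupdate, hyx]
        · simp [pupdate, hyx, h y ⟨hyx, hy⟩]
    simp only [TSat, h']
  | qatom Q k ys x => exact fun _ => Iff.rfl

/-- Flatness of the logic with monotone quantifiers. -/
theorem gSat_iff_forall_tSat {S : Set Quant1} (hS : ∀ q ∈ S, MonotoneQ q) {φ : GForm σ ar}
    (hφ : φ.UsesOnly S) : ∀ {U : Set (PAssign M.A)}, GSat M U φ ↔ ∀ s ∈ U, TSat M s φ := by
  induction φ with
  | rel R ts => exact Iff.rfl
  | nrel R ts => exact Iff.rfl
  | eq x y => exact Iff.rfl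
  | neq x y => exact Iff.rfl
  | and φ ψ ihφ ihψ =>
    intro U
    simp only [GSat, TSat, ihφ hφ.1, ihψ hφ.2]
    exact forall₂_and.symm
  | or φ ψ ihφ ihψ =>
    intro U
    simp only [GSat, TSat, ihφ hφ.1, ihψ hφ.2]
    exact exists_cover_iff_forall_or
  | qu Q x φ ih =>
    intro U
    simp only [GSat, TSat, ih hφ.2]
    constructor
    · rintro ⟨f, hf, h⟩ s hs
      exact hS Q hφ.1 _ _ _ _ (fun a ha => h _ ⟨s, hs, a, ha, rfl⟩) (hf s hs)
    · intro h
      refine ⟨fun s => {a | TSat M (pupdate s x a) φ}, h, ?_⟩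
      rintro _ ⟨s, -, a, ha, rfl⟩
      exact ha
  | qatom Q k ys x => exact hφ.elim

/-- Correctness of `star` when the accumulator contains the free variables and no
quantifier rebinds a variable of the accumulator. -/
theorem gSat_star_iff_forall_tSat {S : Set Quant1} (hS : ∀ q ∈ S, MonotoneQ q)
    {φ : GForm σ ar} (hφ : φ.UsesOnly S) : ∀ {zs : Finset ℕ} {U : Set (PAssign M.A)},
    φ.freeVars ⊆ zs → φ.CleanAux zs → (GSat M U (star zs φ) ↔ ∀ s ∈ U, TSat M s φ) := by
  induction φ with
  | rel R ts => exact fun _ _ => Iff.rfl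
  | nrel R ts => exact fun _ _ => Iff.rfl
  | eq x y => exact fun _ _ => Iff.rfl
  | neq x y => exact fun _ _ => Iff.rfl
  | and φ ψ ihφ ihψ =>
    intro zs U hfv hc
    have hfv := Finset.union_subset_iff.1 hfv
    simp only [_root_.star, GSat, TSat, ihφ hφ.1 hfv.1 hc.1, ihψ hφ.2 hfv.2 hc.2]
    exact forall₂_and.symm
  | or φ ψ ihφ ihψ =>
    intro zs U hfv hc
    have hfv := Finset.union_subset_iff.1 hfv
    simp only [_root_.star, GSat, TSat, ihφ hφ.1 hfv.1 hc.1, ihψ hφ.2 hfv.2 hc.2]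
    exact exists_cover_iff_forall_or
  | qu Q x φ ih =>
    intro zs U hfv hc
    obtain ⟨hx, hc⟩ := hc
    have hfv' : φ.freeVars ⊆ insert x zs := Finset.subset_insert_iff.2 hfv
    have agree_iff : ∀ s t : PAssign M.A,
        (∀ i, t ((zs.sort (· ≤ ·)).get i) = s ((zs.sort (· ≤ ·)).get i)) ↔
          ∀ y ∈ zs, t y = s y := by
      intro s t
      rw [← List.forall_mem_iff_get (p := fun y => t y = s y)]
      simp only [Finset.mem_sort]
    have agree_update : ∀ {s t : PAssign M.A} {a b : M.A},
        (∀ y ∈ zs, pupdate t x b y = pupdate s x a y) → ∀ y ∈ zs, t y = s y := by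
      intro s t a b h y hy
      have hyx : y ≠ x := fun e => hx (e ▸ hy)
      simpa only [pupdate_of_ne _ _ hyx] using h y hy
    have tSat_congr : ∀ {s t : PAssign M.A} (b : M.A), (∀ y ∈ zs, t y = s y) →
        (TSat M (pupdate t x b) φ ↔ TSat M (pupdate s x b) φ) := by
      refine fun {s t} b h => TSat.congr fun y hy => ?_
      by_cases hyx : y = x
      · simp [pupdate, hyx]
      · simp [pupdate, hyx, h y (Finset.mem_of_mem_insert_of_ne (hfv' hy) hyx)]
    simp only [_root_.star, GSat, TSat, ih hφ.2 hfv' hc, agree_iff]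
    constructor
    · rintro ⟨f, hf, U₀, U₁, hU₀, -, hU, ⟨hA, hφ₀⟩, hA'⟩ s hs
      have cover : ∀ a, pupdate s x a ∈ U₀ ∪ U₁ := fun a => by
        rw [hU]
        exact ⟨s, hs, a, by simp [mem_allQ_iff.1 (hf s hs)], rfl⟩
      by_cases h₁ : ∃ a, pupdate s x a ∈ U₁
      · obtain ⟨a, ha⟩ := h₁
        refine hS Q hφ.1 _ _ _ _ (fun b hb => ?_) (hA' _ ha)
        refine hφ₀ _ ((cover b).resolve_right fun hb' => hb ⟨_, hb', fun y hy => ?_,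
          pupdate_self ..⟩)
        have hyx : y ≠ x := fun e => hx (e ▸ hy)
        simp only [pupdate_of_ne _ _ hyx]
      · obtain ⟨a⟩ := M.ne
        have h₀ := (cover a).resolve_right fun h => h₁ ⟨a, h⟩
        refine hS Q hφ.1 _ _ _ _ ?_ (hA _ h₀)
        exact fun b _ => hφ₀ _ ((cover b).resolve_right fun h => h₁ ⟨b, h⟩)
    · intro h
      set V : Set (PAssign M.A) := {t | ∃ s ∈ U, ∃ a ∈ Set.univ, t = pupdate s x a} with hV
      refine ⟨fun _ => Set.univ, fun s _ => mem_allQ_iff.2 rfl, {t ∈ V | TSat M t φ},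
        {t ∈ V | ¬ TSat M t φ}, Set.sep_subset _ _, Set.sep_subset _ _, ?_,
        ⟨?_, fun t ht => ht.2⟩, ?_⟩
      · rw [← Set.sep_or]
        exact Set.sep_eq_self_iff_mem_true.2 fun t _ => em _
      · rintro _ ⟨⟨s, hs, a, -, rfl⟩, -⟩
        refine hS Q hφ.1 _ _ _ _ (fun b hb => ?_) (h s hs)
        refine ⟨pupdate s x b, ⟨⟨s, hs, b, trivial, rfl⟩, hb⟩, fun y hy => ?_,
          pupdate_self ..⟩
        have hyx : y ≠ x := fun e => hx (e ▸ hy)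
        simp only [pupdate_of_ne _ _ hyx]
      · rintro _ ⟨⟨s, hs, a, -, rfl⟩, -⟩
        refine hS Q hφ.1 _ _ _ _ (fun b hb => ?_) (h s hs)
        rintro ⟨_, ⟨⟨t, -, c, -, rfl⟩, hn⟩, hag, hbc⟩
        obtain rfl : c = b := by simpa only [pupdate_self, Option.some.injEq] using hbc
        exact hn ((tSat_congr c (agree_update hag)).2 hb)
  | qatom Q k ys x => exact hφ.elim

theorem onlyForall_star (φ : GForm σ ar) : ∀ zs : Finset ℕ, (star zs φ).OnlyForall := by
  induction φ with
  | and φ ψ ihφ ihψ => exact fun zs => ⟨ihφ zs, ihψ zs⟩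
  | or φ ψ ihφ ihψ => exact fun zs => ⟨ihφ zs, ihψ zs⟩
  | qu Q x φ ih => exact fun zs => ⟨rfl, ⟨trivial, ih _⟩, trivial⟩
  | _ => exact fun _ => trivial

theorem GForm.CleanAux.union {φ : GForm σ ar} : ∀ {zs seen : Finset ℕ},
    φ.CleanAux seen → Disjoint zs φ.boundVars → φ.CleanAux (zs ∪ seen) := by
  induction φ with
  | and φ ψ ihφ ihψ =>
    intro zs seen hc hd
    have hd := Finset.disjoint_union_right.1 hd
    exact ⟨ihφ hc.1 hd.1, ihψ hc.2 hd.2⟩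
  | or φ ψ ihφ ihψ =>
    intro zs seen hc hd
    have hd := Finset.disjoint_union_right.1 hd
    exact ⟨ihφ hc.1 hd.1, ihψ hc.2 hd.2⟩
  | qu Q x φ ih =>
    intro zs seen hc hd
    have hd := Finset.disjoint_insert_right.1 hd
    refine ⟨by simp [hd.1, hc.1], ?_⟩
    rw [← Finset.union_insert]
    exact ih hc.2 hd.2
  | _ => exact fun _ _ => trivial

theorem GForm.Clean.cleanAux_freeVars {φ : GForm σ ar} (h : φ.Clean) :
    φ.CleanAux φ.freeVars := by
  simpa using h.2.union h.1

/-- Rename free variables along `ρ` and bound variables to `n, n + 1, …` by depth. -/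
def GForm.rename : (ℕ → ℕ) → ℕ → GForm σ ar → GForm σ ar
  | ρ, _, .rel R ts => .rel R (ρ ∘ ts)
  | ρ, _, .nrel R ts => .nrel R (ρ ∘ ts)
  | ρ, _, .eq x y => .eq (ρ x) (ρ y)
  | ρ, _, .neq x y => .neq (ρ x) (ρ y)
  | ρ, n, .and φ ψ => .and (φ.rename ρ n) (ψ.rename ρ n)
  | ρ, n, .or φ ψ => .or (φ.rename ρ n) (ψ.rename ρ n)
  | ρ, n, .qu Q x φ => .qu Q n (φ.rename (Function.update ρ x n) (n + 1))
  | ρ, _, .qatom Q k ys x => .qatom Q k (ρ ∘ ys) (ρ x)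

theorem GForm.UsesOnly.rename {S : Set Quant1} {φ : GForm σ ar} (hφ : φ.UsesOnly S) :
    ∀ (ρ : ℕ → ℕ) (n : ℕ), (φ.rename ρ n).UsesOnly S := by
  induction φ with
  | and φ ψ ihφ ihψ => exact fun ρ n => ⟨ihφ hφ.1 ρ n, ihψ hφ.2 ρ n⟩
  | or φ ψ ihφ ihψ => exact fun ρ n => ⟨ihφ hφ.1 ρ n, ihψ hφ.2 ρ n⟩
  | qu Q x φ ih => exact fun ρ n => ⟨hφ.1, ih hφ.2 _ _⟩
  | qatom Q k ys x => exact hφ.elim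
  | _ => exact fun _ _ => trivial

theorem GForm.freeVars_rename_subset {φ : GForm σ ar} : ∀ {ρ : ℕ → ℕ} {n : ℕ} {zs : Finset ℕ},
    (∀ y ∈ φ.freeVars, ρ y ∈ zs) → (φ.rename ρ n).freeVars ⊆ zs := by
  induction φ with
  | and φ ψ ihφ ihψ =>
    intro ρ n zs h
    simp only [GForm.freeVars, Finset.mem_union] at h
    exact Finset.union_subset (ihφ fun y hy => h y (.inl hy)) (ihψ fun y hy => h y (.inr hy))
  | or φ ψ ihφ ihψ =>
    intro ρ n zs h
    simp only [GForm.freeVars, Finset.mem_union] at h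
    exact Finset.union_subset (ihφ fun y hy => h y (.inl hy)) (ihψ fun y hy => h y (.inr hy))
  | qu Q x φ ih =>
    intro ρ n zs h
    simp only [GForm.freeVars, Finset.mem_erase] at h
    refine Finset.subset_insert_iff.1 (ih fun y hy => ?_)
    by_cases hyx : y = x
    · simp [hyx]
    · simp [hyx, h y ⟨hyx, hy⟩]
  | _ =>
    intro ρ n zs h y hy
    simp only [GForm.rename, GForm.freeVars, Finset.mem_image, Finset.mem_insert,
      Finset.mem_singleton, Finset.mem_univ, true_and, Function.comp_apply] at h hy
    grind

theorem GForm.cleanAux_rename {φ : GForm σ ar} : ∀ {ρ : ℕ → ℕ} {n : ℕ} {seen : Finset ℕ},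
    (∀ z ∈ seen, z < n) → (φ.rename ρ n).CleanAux seen := by
  induction φ with
  | and φ ψ ihφ ihψ => exact fun h => ⟨ihφ h, ihψ h⟩
  | or φ ψ ihφ ihψ => exact fun h => ⟨ihφ h, ihψ h⟩
  | qu Q x φ ih =>
    intro ρ n seen h
    refine ⟨fun hn => (h n hn).false, ih fun z hz => ?_⟩
    rcases Finset.mem_insert.1 hz with rfl | hz
    · exact Nat.lt_succ_self _
    · exact (h z hz).trans (Nat.lt_succ_self _)
  | _ => exact fun _ => trivial

theorem tSat_rename_iff {φ : GForm σ ar} : ∀ {ρ : ℕ → ℕ} {n : ℕ} {s : PAssign M.A},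
    (∀ y ∈ φ.freeVars, ρ y < n) → (TSat M s (φ.rename ρ n) ↔ TSat M (s ∘ ρ) φ) := by
  induction φ with
  | and φ ψ ihφ ihψ =>
    intro ρ n s h
    simp only [GForm.freeVars, Finset.mem_union] at h
    exact and_congr (ihφ fun y hy => h y (.inl hy)) (ihψ fun y hy => h y (.inr hy))
  | or φ ψ ihφ ihψ =>
    intro ρ n s h
    simp only [GForm.freeVars, Finset.mem_union] at h
    exact or_congr (ihφ fun y hy => h y (.inl hy)) (ihψ fun y hy => h y (.inr hy))
  | qu Q x φ ih =>
    intro ρ n s h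
    simp only [GForm.freeVars, Finset.mem_erase] at h
    have h' : ∀ a, TSat M (pupdate s n a) (φ.rename (Function.update ρ x n) (n + 1)) ↔
        TSat M (pupdate (s ∘ ρ) x a) φ := by
      intro a
      rw [ih]
      · refine TSat.congr fun y hy => ?_
        by_cases hyx : y = x
        · simp [pupdate, hyx]
        · simp [pupdate, hyx, (h y ⟨hyx, hy⟩).ne]
      · intro y hy
        by_cases hyx : y = x
        · simp [hyx]
        · simpa [hyx] using (h y ⟨hyx, hy⟩).trans (Nat.lt_succ_self _)
    simp only [GForm.rename, TSat, h']
  | _ => exact fun _ => Iff.rfl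

end

/-- Monotone type (1) generalized quantifiers can be eliminated in favour of the
induced generalized atoms: every formula `χ` of `FO(Q)` (for `Q` a monotone type (1)
quantifier) translates into a formula `χs` of `FO(𝒜_Q)` — namely `χ* = star χ.freeVars χ`
whenever `χ` is clean — such that `𝔄,U ⊨ χ` iff `𝔄,U ⊨ χs` for all models `𝔄` and all
teams `U` whose domain contains the free variables of `χ`; moreover `χs` contains no
occurrence of `∃` or `Q`, its only quantifier being `∀`. -/
theorem stmt13 (σ : Type) (ar : σ → ℕ) (Q : Quant1) (hQ : MonotoneQ Q)
    (χ : GForm σ ar) (hχ : χ.UsesOnly {exQ, allQ, Q, Q.dual}) :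
    ∃ χs : GForm σ ar,
      (χ.Clean → χs = star χ.freeVars χ) ∧
      χs.OnlyForall ∧
      ∀ (M : TModel σ ar) (U : Set (PAssign M.A)),
        (∃ Z : Finset ℕ, χ.freeVars ⊆ Z ∧ ∀ s ∈ U, ∀ x : ℕ, (s x ≠ none ↔ x ∈ Z)) →
        (GSat M U χ ↔ GSat M U χs) := by
  have hS : ∀ q ∈ ({exQ, allQ, Q, Q.dual} : Set Quant1), MonotoneQ q := by
    rintro q (rfl | rfl | rfl | rfl)
    exacts [MonotoneQ.exQ, MonotoneQ.exQ.dual, hQ, hQ.dual]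
  by_cases hc : χ.Clean
  · refine ⟨star χ.freeVars χ, fun _ => rfl, onlyForall_star _ _, fun M U _ => ?_⟩
    rw [gSat_iff_forall_tSat hS hχ,
      gSat_star_iff_forall_tSat hS hχ subset_rfl hc.cleanAux_freeVars]
  · set n := χ.freeVars.sup id + 1
    have hn : ∀ y ∈ χ.freeVars, id y < n := fun y hy =>
      Nat.lt_succ_of_le (Finset.le_sup (f := id) hy)
    refine ⟨star χ.freeVars (χ.rename id n), fun h => absurd h hc, onlyForall_star _ _,
      fun M U _ => ?_⟩
    rw [gSat_iff_forall_tSat hS hχ, gSat_star_iff_forall_tSat hS (hχ.rename id n)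
      (GForm.freeVars_rename_subset fun _ hy => hy) (GForm.cleanAux_rename hn)]
    simp only [tSat_rename_iff hn, Function.comp_id]
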